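/- Let x be a solution of the heavy ball equation with vanishing damping and source term g satisfying ∫₀^∞ (1+t)^α ‖g(t)‖ dt < ∞. Then the energy function W(t) = ½‖x'(t)‖² + Φ(x(t)) − Φ* satisfies W(t) = O(1/t^{2α}) as t → +∞, i.e. sup_{t≥1} t^{2α} W(t) < ∞. -/

import Mathlib

open MeasureTheory Filter Real Set RealInnerProductSpace

/-!
Write the damping coefficient as `1 / ρ`, and let `z` minimise `Φ`. Along a solution, the function
`E = ρ² (Φ(x) - Φ(z)) + ‖ρ x' + (x - z) / 2‖² / 2 + (1 - 2ρ') / 8 * ‖x - z‖²`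
controls `ρ² W` from above as soon as `ρ' ≤ 1/4`. In `E'` the cross terms `⟪x - z, x'⟫` cancel, and
the inequality `Φ(x) - Φ(z) ≤ ⟪x - z, ∇Φ(x)⟫` absorbs the potential term, which leaves
`E' ≤ ρ ‖g‖ ‖ρ x' + (x - z) / 2‖ + |ρ''| ‖x - z‖² / 4 ≤ (ρ ‖g‖ + 4 |ρ''|) (E + 1)`.
Since `ρ ‖g‖` and `ρ''` are integrable, Grönwall's inequality bounds `E`, hence `ρ² W`. For
`ρ = (1 + t) ^ α / c` with `α < 1`, both `ρ' → 0` and the integrability of `ρ''` are immediate.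
-/

section Gronwall

variable {u u' k : ℝ → ℝ} {a : ℝ}

lemma le_mul_exp_integral_of_hasDerivAt_le {b : ℝ} (hab : a ≤ b)
    (hu : ∀ t ∈ Icc a b, HasDerivAt u (u' t) t) (hpos : ∀ t ∈ Icc a b, 0 < u t)
    (hk : IntegrableOn k (Icc a b)) (hle : ∀ t ∈ Icc a b, u' t ≤ k t * u t) :
    u b ≤ u a * exp (∫ t in a..b, k t) := by
  have hlog : ∀ t ∈ Icc a b, HasDerivAt (fun τ => log (u τ)) (u' t / u t) t :=
    fun t ht => (hu t ht).log (hpos t ht).ne'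
  have hlog_le : log (u b) - log (u a) ≤ ∫ t in a..b, k t :=
    intervalIntegral.sub_le_integral_of_hasDeriv_right_of_le hab
      (fun t ht => (hlog t ht).continuousAt.continuousWithinAt)
      (fun t ht => (hlog t (Ioo_subset_Icc_self ht)).hasDerivWithinAt) hk
      (fun t ht => (div_le_iff₀ (hpos t (Ioo_subset_Icc_self ht))).2
        (hle t (Ioo_subset_Icc_self ht)))
  have hb : 0 < u b := hpos b (right_mem_Icc.2 hab)
  have ha : 0 < u a := hpos a (left_mem_Icc.2 hab)
  calc u b = exp (log (u b)) := (exp_log hb).symm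
    _ ≤ exp (log (u a) + ∫ t in a..b, k t) := exp_le_exp.2 (by linarith)
    _ = u a * exp (∫ t in a..b, k t) := by rw [exp_add, exp_log ha]

lemma bddAbove_image_Ici_of_hasDerivAt_le_mul
    (hu : ∀ t ∈ Ici a, HasDerivAt u (u' t) t) (hpos : ∀ t ∈ Ici a, 0 < u t)
    (hk : IntegrableOn k (Ici a)) (hk0 : ∀ t ∈ Ici a, 0 ≤ k t)
    (hle : ∀ t ∈ Ici a, u' t ≤ k t * u t) :
    BddAbove (u '' Ici a) := by
  refine ⟨u a * exp (∫ t in Ici a, k t), ?_⟩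
  rintro _ ⟨b, hab, rfl⟩
  have hsub : Icc a b ⊆ Ici a := Icc_subset_Ici_self
  have hint : ∫ t in a..b, k t ≤ ∫ t in Ici a, k t := by
    rw [intervalIntegral.integral_of_le hab]
    exact setIntegral_mono_set hk (ae_restrict_of_forall_mem measurableSet_Ici hk0)
      (Ioc_subset_Icc_self.trans hsub).eventuallyLE
  calc u b ≤ u a * exp (∫ t in a..b, k t) :=
        le_mul_exp_integral_of_hasDerivAt_le hab (fun t ht => hu t (hsub ht))
          (fun t ht => hpos t (hsub ht)) (hk.mono_set hsub) (fun t ht => hle t (hsub ht))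
    _ ≤ u a * exp (∫ t in Ici a, k t) :=
        mul_le_mul_of_nonneg_left (exp_le_exp.2 hint) (hpos a self_mem_Ici).le

end Gronwall

lemma bddAbove_image_Ici_of_continuousOn {f : ℝ → ℝ} {a b : ℝ} (hf : ContinuousOn f (Ici a))
    (hb : BddAbove (f '' Ici b)) : BddAbove (f '' Ici a) := by
  have hcompact : BddAbove (f '' Icc a b) :=
    isCompact_Icc.bddAbove_image (hf.mono Icc_subset_Ici_self)
  refine (hcompact.union hb).mono ?_
  rw [← image_union]
  exact image_mono fun t ht => (le_total t b).imp (fun htb => ⟨ht, htb⟩) id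

lemma sub_le_of_convexOn_of_hasFDerivAt {E : Type*} [NormedAddCommGroup E] [NormedSpace ℝ E]
    {s : Set E} {f : E → ℝ} {f' : E →L[ℝ] ℝ} {p q : E} (hf : ConvexOn ℝ s f) (hp : p ∈ s)
    (hq : q ∈ s) (hf' : HasFDerivAt f f' p) : f p - f q ≤ f' (p - q) := by
  have hderiv : HasDerivAt (f ∘ AffineMap.lineMap p q) (f' (q - p)) (0 : ℝ) :=
    hf'.comp_hasDerivAt_of_eq 0 AffineMap.hasDerivAt_lineMap (AffineMap.lineMap_apply_zero p q).symm
  have hslope := (hf.comp_affineMap (AffineMap.lineMap p q)).le_slope_of_hasDerivAt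
    (x := 0) (y := 1) (by simpa using hp) (by simpa using hq) zero_lt_one hderiv
  have hneg : f' (p - q) = -f' (q - p) := by rw [← map_neg, neg_sub]
  simp only [slope_def_field, Function.comp_apply, AffineMap.lineMap_apply_one,
    AffineMap.lineMap_apply_zero, sub_zero, div_one] at hslope
  linarith

namespace HeavyBall

variable {H : Type*} [NormedAddCommGroup H] {Φ : H → ℝ} {z p v : H}

/-- The mechanical energy `W` at position `p` and velocity `v`, where the potential `Φ` is measured
from its value at the reference point `z` (a minimiser of `Φ`). -/
noncomputable def energy (Φ : H → ℝ) (z p v : H) : ℝ := ‖v‖ ^ 2 / 2 + Φ p - Φ z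

lemma energy_nonneg (hz : Φ z ≤ Φ p) : 0 ≤ energy Φ z p v := by
  unfold energy
  linarith [sq_nonneg ‖v‖]

variable [InnerProductSpace ℝ H] {Φ' : H → H} {r s : ℝ}
  {ρ ρ' ρ'' : ℝ → ℝ} {g x x' x'' : ℝ → H}

/-- `x` solves `x'' + γ x' + Φ'(x) = g` on `[0, ∞)`, where `Φ'` is a vector field on `H` (for the
heavy ball equation, the gradient of the potential), and `x'`, `x''` are the derivatives of `x`. -/
structure IsSolution (γ : ℝ → ℝ) (Φ' : H → H) (g x x' x'' : ℝ → H) : Prop where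
  hasDerivAt_position : ∀ t ∈ Ici (0 : ℝ), HasDerivAt x (x' t) t
  hasDerivAt_velocity : ∀ t ∈ Ici (0 : ℝ), HasDerivAt x' (x'' t) t
  equation : ∀ t ∈ Ici (0 : ℝ), x'' t + γ t • x' t + Φ' (x t) = g t

/-- The Lyapunov function `E` at position `p` and velocity `v`; the numbers `r` and `s` stand for
the values at the current time of the inverse damping coefficient and of its derivative. -/
noncomputable def lyapunov (Φ : H → ℝ) (z : H) (r s : ℝ) (p v : H) : ℝ :=
  r ^ 2 * (Φ p - Φ z) + ‖r • v + (1 / 2 : ℝ) • (p - z)‖ ^ 2 / 2 + (1 - 2 * s) / 8 * ‖p - z‖ ^ 2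

/-- The time derivative of `lyapunov` along a solution. The number `d` stands for the second
derivative of the inverse damping coefficient, `f` for the gradient of `Φ` at `p`, and `b` for the
source term. -/
noncomputable def lyapunovRate (Φ : H → ℝ) (z : H) (r s d : ℝ) (p v f b : H) : ℝ :=
  r * (s - 1 / 2) * ‖v‖ ^ 2 + r * (2 * s * (Φ p - Φ z) - ⟪f, p - z⟫ / 2)
    + r * ⟪r • v + (1 / 2 : ℝ) • (p - z), b⟫ - d * ‖p - z‖ ^ 2 / 4

lemma le_lyapunov (hs : s ≤ 1 / 4) :
    r ^ 2 * (Φ p - Φ z) + ‖r • v + (1 / 2 : ℝ) • (p - z)‖ ^ 2 / 2 + ‖p - z‖ ^ 2 / 16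
      ≤ lyapunov Φ z r s p v := by
  unfold lyapunov
  nlinarith [sq_nonneg ‖p - z‖]

lemma lyapunov_nonneg (hz : Φ z ≤ Φ p) (hs : s ≤ 1 / 4) : 0 ≤ lyapunov Φ z r s p v := by
  have hpot : 0 ≤ r ^ 2 * (Φ p - Φ z) := mul_nonneg (sq_nonneg r) (sub_nonneg.2 hz)
  linarith [le_lyapunov (Φ := Φ) (z := z) (r := r) (p := p) (v := v) hs, sq_nonneg ‖p - z‖,
    sq_nonneg ‖r • v + (1 / 2 : ℝ) • (p - z)‖]

lemma sq_mul_energy_le_four_mul_lyapunov (hz : Φ z ≤ Φ p) (hs : s ≤ 1 / 4) :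
    r ^ 2 * energy Φ z p v ≤ 4 * lyapunov Φ z r s p v := by
  set w := r • v + (1 / 2 : ℝ) • (p - z) with hw
  have hpot : 0 ≤ r ^ 2 * (Φ p - Φ z) := mul_nonneg (sq_nonneg r) (sub_nonneg.2 hz)
  have hvel : ‖r • v‖ ≤ ‖w‖ + ‖p - z‖ / 2 := by
    calc ‖r • v‖ = ‖w - (1 / 2 : ℝ) • (p - z)‖ := by rw [hw, add_sub_cancel_right]
      _ ≤ ‖w‖ + ‖(1 / 2 : ℝ) • (p - z)‖ := norm_sub_le _ _
      _ = ‖w‖ + ‖p - z‖ / 2 := by rw [norm_smul, norm_of_nonneg (by norm_num)]; ring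
  have hvel_sq : ‖r • v‖ ^ 2 ≤ 2 * ‖w‖ ^ 2 + ‖p - z‖ ^ 2 / 2 := by
    nlinarith [norm_nonneg (r • v), sq_nonneg (‖w‖ - ‖p - z‖ / 2)]
  calc r ^ 2 * energy Φ z p v = ‖r • v‖ ^ 2 / 2 + r ^ 2 * (Φ p - Φ z) := by
        rw [norm_smul, mul_pow, norm_eq_abs, sq_abs, energy]; ring
    _ ≤ 4 * (r ^ 2 * (Φ p - Φ z) + ‖w‖ ^ 2 / 2 + ‖p - z‖ ^ 2 / 16) := by
        linarith [sq_nonneg ‖w‖, sq_nonneg ‖p - z‖]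
    _ ≤ 4 * lyapunov Φ z r s p v := by gcongr; exact le_lyapunov hs

lemma hasDerivAt_lyapunov (hsol : IsSolution (fun t => (ρ t)⁻¹) Φ' g x x' x'')
    {t : ℝ} (ht : t ∈ Ici (0 : ℝ))
    (hΦ : HasFDerivAt Φ (innerSL ℝ (Φ' (x t))) (x t))
    (hρ : HasDerivAt ρ (ρ' t) t) (hρ' : HasDerivAt ρ' (ρ'' t) t) (hρ0 : ρ t ≠ 0) :
    HasDerivAt (fun τ => lyapunov Φ z (ρ τ) (ρ' τ) (x τ) (x' τ))
      (lyapunovRate Φ z (ρ t) (ρ' t) (ρ'' t) (x t) (x' t) (Φ' (x t)) (g t)) t := by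
  have hx := hsol.hasDerivAt_position t ht
  have hpot : HasDerivAt (fun τ => Φ (x τ)) ⟪Φ' (x t), x' t⟫ t := hΦ.comp_hasDerivAt t hx
  have hdisp := hx.sub_const z
  have hcomb : HasDerivAt (fun τ => ρ τ • x' τ + (1 / 2 : ℝ) • (x τ - z))
      (ρ t • (g t - Φ' (x t)) + (ρ' t - 1 / 2) • x' t) t := by
    refine ((hρ.smul (hsol.hasDerivAt_velocity t ht)).add (hdisp.const_smul _)).congr_deriv ?_
    rw [← hsol.equation t ht, add_sub_cancel_right, smul_add, smul_inv_smul₀ hρ0]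
    module
  refine ((((hρ.fun_pow 2).mul (hpot.sub_const (Φ z))).add (hcomb.norm_sq.div_const 2)).add
    ((((hρ'.const_mul 2).const_sub 1).div_const 8).mul hdisp.norm_sq)).congr_deriv ?_
  rw [lyapunovRate, real_inner_comm (x t - z) (Φ' (x t)), real_inner_comm (x' t) (Φ' (x t))]
  simp only [inner_add_left, inner_add_right, inner_sub_right, real_inner_smul_left,
    real_inner_smul_right, real_inner_self_eq_norm_sq]
  push_cast
  ring

lemma lyapunovRate_le {d : ℝ} {f b : H} (hr : 0 ≤ r) (hs : s ≤ 1 / 4) (hz : Φ z ≤ Φ p)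
    (hsubgrad : Φ p - Φ z ≤ ⟪f, p - z⟫) :
    lyapunovRate Φ z r s d p v f b ≤ (r * ‖b‖ + 4 * |d|) * (lyapunov Φ z r s p v + 1) := by
  set w := r • v + (1 / 2 : ℝ) • (p - z)
  have hpot0 : 0 ≤ r ^ 2 * (Φ p - Φ z) := mul_nonneg (sq_nonneg r) (sub_nonneg.2 hz)
  have hlow : r ^ 2 * (Φ p - Φ z) + ‖w‖ ^ 2 / 2 + ‖p - z‖ ^ 2 / 16 ≤ lyapunov Φ z r s p v :=
    le_lyapunov hs
  have hkin : r * (s - 1 / 2) * ‖v‖ ^ 2 ≤ 0 :=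
    mul_nonpos_of_nonpos_of_nonneg (mul_nonpos_of_nonneg_of_nonpos hr (by linarith)) (sq_nonneg _)
  have hpot : r * (2 * s * (Φ p - Φ z) - ⟪f, p - z⟫ / 2) ≤ 0 :=
    mul_nonpos_of_nonneg_of_nonpos hr (by nlinarith)
  have hsource : r * ⟪w, b⟫ ≤ r * ‖b‖ * (lyapunov Φ z r s p v + 1) := by
    have hw : ‖w‖ ≤ lyapunov Φ z r s p v + 1 := by
      nlinarith [sq_nonneg (‖w‖ - 1), sq_nonneg ‖p - z‖]
    calc r * ⟪w, b⟫ ≤ r * (‖w‖ * ‖b‖) := by gcongr; exact real_inner_le_norm w b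
      _ = r * ‖b‖ * ‖w‖ := by ring
      _ ≤ _ := by gcongr
  have hdisp : -(d * ‖p - z‖ ^ 2 / 4) ≤ 4 * |d| * (lyapunov Φ z r s p v + 1) := by
    calc -(d * ‖p - z‖ ^ 2 / 4) = -d * (‖p - z‖ ^ 2 / 4) := by ring
      _ ≤ |d| * (‖p - z‖ ^ 2 / 4) := by gcongr; exact neg_le_abs d
      _ = 4 * |d| * (‖p - z‖ ^ 2 / 16) := by ring
      _ ≤ _ := by gcongr; nlinarith [sq_nonneg ‖w‖]
  unfold lyapunovRate
  linarith

lemma bddAbove_lyapunov (hsol : IsSolution (fun t => (ρ t)⁻¹) Φ' g x x' x'')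
    (hΦ : ∀ u, HasFDerivAt Φ (innerSL ℝ (Φ' u)) u) (hz : ∀ u, Φ z ≤ Φ u)
    (hsubgrad : ∀ u, Φ u - Φ z ≤ ⟪Φ' u, u - z⟫)
    (hρ : ∀ t ∈ Ici (0 : ℝ), HasDerivAt ρ (ρ' t) t)
    (hρ' : ∀ t ∈ Ici (0 : ℝ), HasDerivAt ρ' (ρ'' t) t)
    (hρ0 : ∀ t ∈ Ici (0 : ℝ), 0 < ρ t) (hρ'' : IntegrableOn ρ'' (Ici 0))
    (hg : IntegrableOn (fun t => ρ t * ‖g t‖) (Ici 0))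
    {T : ℝ} (hT : 0 ≤ T) (hsmall : ∀ t ∈ Ici T, ρ' t ≤ 1 / 4) :
    BddAbove ((fun t => lyapunov Φ z (ρ t) (ρ' t) (x t) (x' t)) '' Ici T) := by
  have hsub : Ici T ⊆ Ici 0 := Ici_subset_Ici.2 hT
  have hbdd := bddAbove_image_Ici_of_hasDerivAt_le_mul
    (u := fun t => lyapunov Φ z (ρ t) (ρ' t) (x t) (x' t) + 1)
    (k := fun t => ρ t * ‖g t‖ + 4 * |ρ'' t|)
    (fun t ht => (hasDerivAt_lyapunov hsol (hsub ht) (hΦ (x t)) (hρ t (hsub ht))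
      (hρ' t (hsub ht)) (hρ0 t (hsub ht)).ne').add_const 1)
    (fun t ht => by linarith [lyapunov_nonneg (r := ρ t) (v := x' t) (hz (x t)) (hsmall t ht)])
    ((hg.add (hρ''.abs.const_mul 4)).mono_set hsub)
    (fun t ht => add_nonneg (mul_nonneg (hρ0 t (hsub ht)).le (norm_nonneg _)) (by positivity))
    (fun t ht => lyapunovRate_le (hρ0 t (hsub ht)).le (hsmall t ht) (hz (x t)) (hsubgrad (x t)))
  obtain ⟨M, hM⟩ := hbdd
  refine ⟨M - 1, ?_⟩
  rintro _ ⟨t, ht, rfl⟩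
  exact le_sub_iff_add_le.2 (hM ⟨t, ht, rfl⟩)

lemma bddAbove_sq_mul_energy (hsol : IsSolution (fun t => (ρ t)⁻¹) Φ' g x x' x'')
    (hΦ : ∀ u, HasFDerivAt Φ (innerSL ℝ (Φ' u)) u) (hz : ∀ u, Φ z ≤ Φ u)
    (hsubgrad : ∀ u, Φ u - Φ z ≤ ⟪Φ' u, u - z⟫)
    (hρ : ∀ t ∈ Ici (0 : ℝ), HasDerivAt ρ (ρ' t) t)
    (hρ' : ∀ t ∈ Ici (0 : ℝ), HasDerivAt ρ' (ρ'' t) t)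
    (hρ0 : ∀ t ∈ Ici (0 : ℝ), 0 < ρ t) (hρ'' : IntegrableOn ρ'' (Ici 0))
    (hg : IntegrableOn (fun t => ρ t * ‖g t‖) (Ici 0))
    (hsmall : ∀ᶠ t in atTop, ρ' t ≤ 1 / 4) :
    BddAbove ((fun t => ρ t ^ 2 * energy Φ z (x t) (x' t)) '' Ici 0) := by
  obtain ⟨T, hT, hsmallT⟩ := (atTop_basis' 0).eventually_iff.1 hsmall
  have hcont : ContinuousOn (fun t => ρ t ^ 2 * energy Φ z (x t) (x' t)) (Ici 0) := by
    intro t ht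
    have hx := (hsol.hasDerivAt_position t ht).continuousAt
    have hx' := (hsol.hasDerivAt_velocity t ht).continuousAt
    have hΦx : ContinuousAt (fun τ => Φ (x τ)) t :=
      ContinuousAt.comp (f := x) (hΦ (x t)).continuousAt hx
    exact (((hρ t ht).continuousAt.pow 2).mul
      ((((hx'.norm.pow 2).div_const 2).add hΦx).sub continuousAt_const)).continuousWithinAt
  obtain ⟨M, hM⟩ := bddAbove_lyapunov hsol hΦ hz hsubgrad hρ hρ' hρ0 hρ'' hg hT hsmallT
  refine bddAbove_image_Ici_of_continuousOn (b := T) hcont ⟨4 * M, ?_⟩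
  rintro _ ⟨t, ht, rfl⟩
  exact (sq_mul_energy_le_four_mul_lyapunov (hz (x t)) (hsmallT ht)).trans
    (mul_le_mul_of_nonneg_left (hM ⟨t, ht, rfl⟩) (by norm_num))

end HeavyBall

lemma hasDerivAt_one_add_rpow (β : ℝ) {t : ℝ} (ht : 1 + t ≠ 0) :
    HasDerivAt (fun τ : ℝ => (1 + τ) ^ β) (β * (1 + t) ^ (β - 1)) t := by
  simpa using ((hasDerivAt_id' t).const_add 1).rpow_const (p := β) (Or.inl ht)

lemma tendsto_one_add_rpow_atTop_zero {β : ℝ} (hβ : β < 0) :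
    Tendsto (fun t : ℝ => (1 + t) ^ β) atTop (nhds 0) := by
  simpa [Function.comp_def] using (tendsto_rpow_neg_atTop (neg_pos.2 hβ)).comp
    (tendsto_atTop_add_const_left atTop (1 : ℝ) tendsto_id)

lemma integrableOn_one_add_rpow_Ici {β : ℝ} (hβ : β < -1) :
    IntegrableOn (fun t : ℝ => (1 + t) ^ β) (Ici 0) := by
  simpa only [add_comm] using (integrableOn_Ici_iff_integrableOn_Ioi (b := (0 : ℝ))).2
    (integrableOn_add_rpow_Ioi_of_lt (c := 0) (m := 1) hβ (by norm_num))

lemma rpow_le_two_rpow_abs_mul_one_add_rpow (β : ℝ) {t : ℝ} (ht : 1 ≤ t) :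
    t ^ β ≤ 2 ^ |β| * (1 + t) ^ β := by
  have ht0 : 0 < t := by linarith
  rcases le_total 0 β with hβ | hβ
  · calc t ^ β ≤ (1 + t) ^ β := rpow_le_rpow ht0.le (by linarith) hβ
      _ ≤ 2 ^ |β| * (1 + t) ^ β :=
        le_mul_of_one_le_left (by positivity) (one_le_rpow one_le_two (abs_nonneg β))
  · calc t ^ β = 2 ^ |β| * (2 * t) ^ β := by
          rw [mul_rpow zero_le_two ht0.le, ← mul_assoc, ← rpow_add two_pos, abs_of_nonpos hβ,
            neg_add_cancel, rpow_zero, one_mul]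
      _ ≤ 2 ^ |β| * (1 + t) ^ β := by
          gcongr 2 ^ |β| * ?_
          exact rpow_le_rpow_of_nonpos (by linarith) (by linarith) hβ

open HeavyBall in
theorem heavy_ball_energy_big_O_general
    {H : Type*} [NormedAddCommGroup H] [InnerProductSpace ℝ H]
    {c α : ℝ} (hc : 0 < c) (hα : α < 1) {Φ : H → ℝ} {Φ' : H → H} {z : H}
    (hΦ : ∀ u, HasFDerivAt Φ (innerSL ℝ (Φ' u)) u) (hz : ∀ u, Φ z ≤ Φ u)
    (hsubgrad : ∀ u, Φ u - Φ z ≤ ⟪Φ' u, u - z⟫) {g x x' x'' : ℝ → H}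
    (hsol : IsSolution (fun t => c / (1 + t) ^ α) Φ' g x x' x'')
    (hg : IntegrableOn (fun t => (1 + t) ^ α * ‖g t‖) (Ici (0 : ℝ))) :
    ∃ M : ℝ, ∀ t ≥ (1 : ℝ), t ^ (2 * α) * energy Φ z (x t) (x' t) ≤ M := by
  have hpos : ∀ t ∈ Ici (0 : ℝ), 0 < 1 + t := fun t ht => by linarith [mem_Ici.1 ht]
  have hρsmall : ∀ᶠ t : ℝ in atTop, α * (1 + t) ^ (α - 1) / c ≤ 1 / 4 := by
    have hlim := ((tendsto_one_add_rpow_atTop_zero (sub_neg.2 hα)).const_mul α).div_const c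
    exact hlim.eventually_le_const (by norm_num)
  obtain ⟨M, hM⟩ := bddAbove_sq_mul_energy (ρ := fun t => (1 + t) ^ α / c)
    (by simpa only [inv_div] using hsol) hΦ hz hsubgrad
    (fun t ht => (hasDerivAt_one_add_rpow α (hpos t ht).ne').div_const c)
    (fun t ht => ((hasDerivAt_one_add_rpow (α - 1) (hpos t ht).ne').const_mul α).div_const c)
    (fun t ht => div_pos (rpow_pos_of_pos (hpos t ht) α) hc)
    (((integrableOn_one_add_rpow_Ici (by linarith)).const_mul _).const_mul _ |>.div_const c)
    (by simpa only [IntegrableOn, div_mul_eq_mul_div] using hg.div_const c) hρsmall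
  refine ⟨2 ^ |2 * α| * (c ^ 2 * M), fun t ht => ?_⟩
  have ht0 : t ∈ Ici (0 : ℝ) := zero_le_one.trans ht
  have henergy : 0 ≤ energy Φ z (x t) (x' t) := energy_nonneg (hz (x t))
  have hsq : (1 + t) ^ (2 * α) = c ^ 2 * ((1 + t) ^ α / c) ^ 2 := by
    rw [div_pow, mul_div_cancel₀ _ (pow_ne_zero 2 hc.ne'), mul_comm 2 α,
      rpow_mul (hpos t ht0).le, rpow_two]
  calc t ^ (2 * α) * energy Φ z (x t) (x' t)
      ≤ 2 ^ |2 * α| * (1 + t) ^ (2 * α) * energy Φ z (x t) (x' t) := by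
        gcongr; exact rpow_le_two_rpow_abs_mul_one_add_rpow _ ht
    _ = 2 ^ |2 * α| * (c ^ 2 * (((1 + t) ^ α / c) ^ 2 * energy Φ z (x t) (x' t))) := by
        rw [hsq]; ring
    _ ≤ 2 ^ |2 * α| * (c ^ 2 * M) := by gcongr; exact hM ⟨t, ht0, rfl⟩

theorem heavy_ball_energy_big_O
    {H : Type*} [NormedAddCommGroup H] [InnerProductSpace ℝ H] [CompleteSpace H]
    (c α : ℝ) (hc : 0 < c) (hα0 : 0 ≤ α) (hα1 : α < 1)
    (Φ : H → ℝ) (Φ' : H → H) (Φstar : ℝ)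
    (hΦconv : ConvexOn ℝ Set.univ Φ)
    (hΦdiff : ∀ u : H, HasGradientAt Φ (Φ' u) u)
    (hΦcont : Continuous Φ')
    (hargmin : {v : H | ∀ u, Φ v ≤ Φ u}.Nonempty)
    (hΦstar : ∀ v ∈ {v : H | ∀ u, Φ v ≤ Φ u}, Φ v = Φstar)
    (g : ℝ → H) (hg : IntegrableOn g (Ici (0:ℝ)))
    (x x' x'' : ℝ → H)
    (hx1 : ∀ t ∈ Ici (0:ℝ), HasDerivAt x (x' t) t)
    (hx2 : ∀ t ∈ Ici (0:ℝ), HasDerivAt x' (x'' t) t)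
    (hode : ∀ t ∈ Ici (0:ℝ),
      x'' t + (c / (1 + t) ^ α) • x' t + Φ' (x t) = g t)
    (hgα : IntegrableOn (fun t => (1 + t) ^ α * ‖g t‖) (Ici (0:ℝ))) :
    ∃ M : ℝ, ∀ t ≥ (1:ℝ),
      t ^ (2 * α) * (‖x' t‖ ^ 2 / 2 + Φ (x t) - Φstar) ≤ M := by
  obtain ⟨z, hz⟩ := hargmin
  simpa only [HeavyBall.energy, hΦstar z hz] using heavy_ball_energy_big_O_general hc hα1 hΦdiff hz
    (fun u => sub_le_of_convexOn_of_hasFDerivAt hΦconv trivial trivial (hΦdiff u))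
    ⟨hx1, hx2, hode⟩ hgα
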